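/- The set S = {Ī_n : n ≥ 0} satisfies the left reversibility condition in Γ: if E ∈ Γ and n ≥ 0 satisfy E·Ī_n = 0, then there exists m ≥ 0 such that Ī_m·E = 0. Together with the facts that I = Ī_0 ∈ S, that S is closed under multiplication, and the left Ore condition, this says that S is a left denominator set in Γ. -/

import Mathlib

/-!
Multiplying by `Ī_n` on the right erases the columns of index `< n`, and multiplying by `Ī_m` on
the left erases the rows of index `< m` (`matMul_IbarM`, `IbarM_matMul`). Since every column of
`E ∈ Γ` has finite support, there is an `m` beyond which the first `n` columns of `E` vanish
(`exists_row_bound`). If `E·Ī_n = 0`, only those columns can be non-zero, so `Ī_m·E = 0`; and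
for arbitrary `E` and that `m`, `E' = Ī_m·E` satisfies `E'·Ī_n = E' = Ī_m·E`: the left Ore condition.
-/

/-- The set of entries `{A i j | i j : ℕ}` of an `ℕ × ℕ` matrix is finite. -/
def entriesFinite {k : Type*} [CommRing k] (A : ℕ → ℕ → k) : Prop :=
  (Set.range fun p : ℕ × ℕ => A p.1 p.2).Finite

/-- Each row and each column of `A` has at most `n` non-zero entries. -/
def rowColBound {k : Type*} [CommRing k] (A : ℕ → ℕ → k) (n : ℕ) : Prop :=
  (∀ i, ∃ s : Finset ℕ, s.card ≤ n ∧ ∀ j, A i j ≠ 0 → j ∈ s) ∧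
  (∀ j, ∃ s : Finset ℕ, s.card ≤ n ∧ ∀ i, A i j ≠ 0 → i ∈ s)

/-- Membership in the algebra `Γ` of the paper: finitely many distinct entries, and a
uniform bound `n_A` on the number of non-zero entries in each row and each column. -/
def memGamma {k : Type*} [CommRing k] (A : ℕ → ℕ → k) : Prop :=
  entriesFinite A ∧ ∃ n, rowColBound A n

/-- Ordinary matrix multiplication, via a finite sum (`finsum`). -/
noncomputable def matMul {k : Type*} [CommRing k] (A B : ℕ → ℕ → k) : ℕ → ℕ → k :=
  fun i j => ∑ᶠ l, A i l * B l j

/-- The identity `ℕ × ℕ` matrix. -/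
def idM (k : Type*) [CommRing k] : ℕ → ℕ → k :=
  fun i j => if i = j then 1 else 0

/-- Membership in `Mat`: only finitely many non-zero entries. -/
def memMat {k : Type*} [CommRing k] (A : ℕ → ℕ → k) : Prop :=
  {p : ℕ × ℕ | A p.1 p.2 ≠ 0}.Finite

/-- The matrix `Ī_n = I - I_n`, having `1` on the diagonal places past the first `n` ones and
`0` elsewhere. (The paper indexes matrices by `{1, 2, ...}` and puts `(Ī_n) i j = 1` iff
`i = j > n`; with `ℕ = {0, 1, ...}` this reads `i = j ≥ n`, so that `Ī_0 = I`.) -/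
def IbarM (k : Type*) [CommRing k] (n : ℕ) : ℕ → ℕ → k :=
  fun i j => if i = j ∧ n ≤ i then 1 else 0

theorem matMul_IbarM {k : Type*} [CommRing k] (E : ℕ → ℕ → k) (n i j : ℕ) :
    matMul E (IbarM k n) i j = if n ≤ j then E i j else 0 := by
  unfold matMul IbarM
  rw [finsum_eq_single _ j]
  · simp
  · intro l hl
    simp [hl]

theorem IbarM_matMul {k : Type*} [CommRing k] (E : ℕ → ℕ → k) (n i j : ℕ) :
    matMul (IbarM k n) E i j = if n ≤ i then E i j else 0 := by
  unfold matMul IbarM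
  rw [finsum_eq_single _ i]
  · simp
  · intro l hl
    simp [hl.symm]

theorem exists_row_bound {k : Type*} [CommRing k] {E : ℕ → ℕ → k} (hE : memGamma E) (n : ℕ) :
    ∃ m : ℕ, ∀ i j, m ≤ i → j < n → E i j = 0 := by
  obtain ⟨-, b, -, hc⟩ := hE
  choose s _ hs using hc
  refine ⟨((Finset.range n).biUnion s).sup id + 1, fun i j hi hj => ?_⟩
  by_contra h
  have hmem : i ∈ (Finset.range n).biUnion s :=
    Finset.mem_biUnion.2 ⟨j, Finset.mem_range.2 hj, hs j i h⟩
  have hle : i ≤ ((Finset.range n).biUnion s).sup id := Finset.le_sup (f := id) hmem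
  omega

theorem memGamma_truncate {k : Type*} [CommRing k] {E : ℕ → ℕ → k} (hE : memGamma E) (m : ℕ) :
    memGamma fun i j => if m ≤ i then E i j else 0 := by
  obtain ⟨hf, b, hr, hc⟩ := hE
  refine ⟨(hf.insert 0).subset ?_, b, fun i => ?_, fun j => ?_⟩
  · rintro _ ⟨p, rfl⟩
    by_cases h : m ≤ p.1
    · exact Or.inr ⟨p, by simp [h]⟩
    · exact Or.inl (by simp [h])
  · obtain ⟨s, h1, h2⟩ := hr i
    exact ⟨s, h1, fun j hj => h2 j fun h => hj (by simp [h])⟩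
  · obtain ⟨s, h1, h2⟩ := hc j
    exact ⟨s, h1, fun i hi => h2 i fun h => hi (by simp [h])⟩

/-- The set `S = {Ī_n : n ≥ 0}` satisfies the left reversibility condition
in `Γ`: if `E ∈ Γ` and `E·Ī_n = 0` then `Ī_m·E = 0` for some `m`. Together with `I = Ī_0 ∈ S`,
closure of `S` under multiplication and the left Ore condition, this says that `S` is a left
denominator set in `Γ`. -/
theorem Ibar_left_denominator_set (k : Type*) [CommRing k] :
    -- left reversibility
    (∀ (E : ℕ → ℕ → k) (n : ℕ), memGamma E →
      matMul E (IbarM k n) = (fun _ _ => (0 : k)) →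
      ∃ m : ℕ, matMul (IbarM k m) E = fun _ _ => (0 : k)) ∧
    -- I = Ī_0 belongs to S
    IbarM k 0 = idM k ∧
    -- S is closed under multiplication
    (∀ n m : ℕ, ∃ p : ℕ, matMul (IbarM k n) (IbarM k m) = IbarM k p) ∧
    -- left Ore condition
    (∀ (n : ℕ) (E : ℕ → ℕ → k), memGamma E →
      ∃ (m : ℕ) (E' : ℕ → ℕ → k), memGamma E' ∧
        matMul E' (IbarM k n) = matMul (IbarM k m) E) := by
  refine ⟨fun E n hE h0 => ?_, ?_, fun n m => ⟨max n m, ?_⟩, fun n E hE => ?_⟩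
  · obtain ⟨m, hm⟩ := exists_row_bound hE n
    refine ⟨m, ?_⟩
    funext i j
    rw [IbarM_matMul]
    split_ifs with hi
    · rcases lt_or_ge j n with hj | hj
      · exact hm i j hi hj
      · have h := congrFun (congrFun h0 i) j
        rwa [matMul_IbarM, if_pos hj] at h
    · rfl
  · funext i j
    simp [IbarM, idM]
  · funext i j
    rw [IbarM_matMul]
    unfold IbarM
    split_ifs <;> first | rfl | omega
  · obtain ⟨m, hm⟩ := exists_row_bound hE n
    refine ⟨m, _, memGamma_truncate hE m, ?_⟩
    funext i j
    rw [IbarM_matMul, matMul_IbarM]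
    by_cases hj : n ≤ j
    · simp [hj]
    · by_cases hi : m ≤ i
      · simp [hj, hm i j hi (not_le.1 hj)]
      · simp [hi]
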